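/- arXiv:2305.10335 — 2 statements merged into one kernel-verified Lean document; each statement's English description precedes it below -/
import Mathlib

section
/- Let X be a random vector with values in EuclideanSpace ℝ (Fin n) whose distribution is the multivariate Gaussian measure with mean vector μ and symmetric positive semidefinite covariance matrix C. Then ‖X‖² has a (noncentral) chi-square distribution — i.e., there exist r : ℕ and ν ≥ 0 such that for all real t in some neighborhood of 0, E[exp(t·‖X‖²)] = exp(t·ν²/(1−2t))·(1−2t)^(−r/2) — if and only if C² = C and C μ = μ. Moreover, in that case r = rank C and ν = ‖μ‖. -/
open MeasureTheory ProbabilityTheory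
open scoped RealInnerProductSpace

/-- `X` is a random vector whose law is the multivariate Gaussian measure with mean `μ` and
covariance matrix `C`: every one-dimensional projection `⟪X, v⟫` is Gaussian with mean `⟪μ, v⟫`
and variance `⟪C v, v⟫`. -/
def IsMultivariateGaussian {Ω : Type*} [MeasurableSpace Ω] {n : ℕ}
    (P : Measure Ω) (X : Ω → EuclideanSpace ℝ (Fin n))
    (μ : EuclideanSpace ℝ (Fin n)) (C : Matrix (Fin n) (Fin n) ℝ) : Prop :=
  Measurable X ∧
    ∀ v : EuclideanSpace ℝ (Fin n),
      P.map (fun ω => ⟪X ω, v⟫) =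
        gaussianReal ⟪μ, v⟫ (⟪Matrix.toEuclideanLin C v, v⟫).toNNReal

/-!
In an orthonormal eigenbasis `bᵢ` of `C` the coordinates of `X` are independent Gaussians whose
variances are the eigenvalues `vᵢ`, so near `0` the logarithm of `E[exp (t ‖X‖²)]` is a sum of
cumulant generating functions of scaled noncentral chi-squares. With `aᵢ = ⟪μ, bᵢ⟫²`, comparing
Taylor coefficients turns the chi-square identity into the moment problem
`∑ᵢ (vᵢ ^ (k + 1) + (k + 1) aᵢ vᵢ ^ k) = r + (k + 1) ν²` for all `k`, which by linearity becomes
`∑ᵢ ((vᵢ + aᵢ) p(vᵢ) + aᵢ vᵢ p'(vᵢ)) = (r + ν²) p(1) + ν² p'(1)` for all polynomials `p`. Take `p`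
vanishing at `1`, equal to `1` at every other `vᵢ`, and critical at all these points: as all terms
are nonnegative, each `i` has `vᵢ = 1` or `vᵢ = aᵢ = 0`, which says that `C² = C` and `C μ = μ`. The
moments `k = 0, 1` then give `r = ∑ᵢ vᵢ = rank C` and `ν² = ∑ᵢ aᵢ = ‖μ‖²`.
-/

open Filter Topology

section PowerSeries

lemma eq_of_eventually_hasSum_pow_smul {𝕜 E : Type*} [NontriviallyNormedField 𝕜]
    [NormedAddCommGroup E] [NormedSpace 𝕜 E] {c d : ℕ → E} {f : 𝕜 → E}
    (hc : ∀ᶠ t in 𝓝 0, HasSum (fun k => t ^ k • c k) (f t))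
    (hd : ∀ᶠ t in 𝓝 0, HasSum (fun k => t ^ k • d k) (f t)) : c = d := by
  let series (e : ℕ → E) : FormalMultilinearSeries 𝕜 𝕜 E :=
    fun k => ContinuousMultilinearMap.mkPiRing 𝕜 (Fin k) (e k)
  have coeff_series (e : ℕ → E) (k : ℕ) : (series e).coeff k = e k := by
    simp [series, FormalMultilinearSeries.coeff]
  have hasFPowerSeriesAt_series {e : ℕ → E}
      (he : ∀ᶠ t in 𝓝 0, HasSum (fun k => t ^ k • e k) (f t)) :
      HasFPowerSeriesAt f (series e) 0 := by
    simpa [hasFPowerSeriesAt_iff, coeff_series] using he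
  have hseries : series c = series d :=
    (hasFPowerSeriesAt_series hc).eq_formalMultilinearSeries (hasFPowerSeriesAt_series hd)
  ext k
  rw [← coeff_series c, hseries, coeff_series]

lemma eq_of_eventually_hasSum_pow_succ_smul {𝕜 E : Type*} [NontriviallyNormedField 𝕜]
    [NormedAddCommGroup E] [NormedSpace 𝕜 E] {c d : ℕ → E} {f : 𝕜 → E}
    (hc : ∀ᶠ t in 𝓝 0, HasSum (fun k => t ^ (k + 1) • c k) (f t))
    (hd : ∀ᶠ t in 𝓝 0, HasSum (fun k => t ^ (k + 1) • d k) (f t)) : c = d := by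
  let shift (e : ℕ → E) : ℕ → E := fun k => Nat.casesOn k 0 e
  have hasSum_shift {e : ℕ → E}
      (he : ∀ᶠ t in 𝓝 0, HasSum (fun k => t ^ (k + 1) • e k) (f t)) :
      ∀ᶠ t in 𝓝 0, HasSum (fun k => t ^ k • shift e k) (f t) := by
    filter_upwards [he] with t ht
    rw [← hasSum_nat_add_iff' 1]
    simpa [shift] using ht
  have hshift := eq_of_eventually_hasSum_pow_smul (hasSum_shift hc) (hasSum_shift hd)
  exact funext fun k => congrFun hshift (k + 1)

end PowerSeries

/-- The cumulant generating function at `t` of `v · χ²(r, ν)`, where `a = v ν²`: for `r : ℕ` this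
is the law of the sum of the squares of `r` independent real Gaussians of variance `v` whose squared
means add up to `a`. With the parameter `a` in place of `ν`, the case `v = 0` is the constant `a`.
The formula is meaningful for `2 * t * v < 1`. -/
noncomputable def scaledChiSqCGF (r v a t : ℝ) : ℝ :=
  t * a / (1 - 2 * t * v) - r / 2 * Real.log (1 - 2 * t * v)

section CumulantGeneratingFunction

lemma exp_scaledChiSqCGF {v t : ℝ} (r a : ℝ) (h : 2 * t * v < 1) :
    Real.exp (scaledChiSqCGF r v a t) =
      Real.exp (t * a / (1 - 2 * t * v)) * (1 - 2 * t * v) ^ (-r / 2) := by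
  rw [Real.rpow_def_of_pos (sub_pos.2 h), ← Real.exp_add, scaledChiSqCGF]
  ring_nf

lemma hasSum_scaledChiSqCGF {v t : ℝ} (r a : ℝ) (h : |2 * t * v| < 1) :
    HasSum (fun k : ℕ => t ^ (k + 1) * (2 ^ k / (k + 1) * (r * v ^ (k + 1) + (k + 1) * a * v ^ k)))
      (scaledChiSqCGF r v a t) := by
  have hlog := (Real.hasSum_pow_div_log_of_abs_lt_one h).mul_left (r / 2)
  have hgeom := (hasSum_geometric_of_abs_lt_one h).mul_left (t * a)
  convert! hgeom.add hlog using 1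
  · ext k
    field_simp
    ring
  · rw [scaledChiSqCGF, div_eq_mul_inv]
    ring

lemma eventually_abs_two_mul_mul_lt_one (v : ℝ) : ∀ᶠ t in 𝓝 (0 : ℝ), |2 * t * v| < 1 := by
  have hcont : Continuous fun t : ℝ => |2 * t * v| := by fun_prop
  exact hcont.continuousAt.eventually_lt_const (by simp)

lemma sum_moments_eq_of_sum_scaledChiSqCGF_eventuallyEq {ι : Type*} [Fintype ι]
    {r v a : ι → ℝ} {s w b : ℝ}
    (h : (fun t => ∑ i, scaledChiSqCGF (r i) (v i) (a i) t) =ᶠ[𝓝 0] scaledChiSqCGF s w b) (k : ℕ) :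
    ∑ i, (r i * v i ^ (k + 1) + (k + 1) * a i * v i ^ k) =
      s * w ^ (k + 1) + (k + 1) * b * w ^ k := by
  have hleft : ∀ᶠ t in 𝓝 (0 : ℝ), HasSum (fun k : ℕ => t ^ (k + 1) • (2 ^ k / ((k : ℝ) + 1) *
      ∑ i, (r i * v i ^ (k + 1) + (k + 1) * a i * v i ^ k))) (scaledChiSqCGF s w b t) := by
    filter_upwards [h, eventually_all.2 fun i => eventually_abs_two_mul_mul_lt_one (v i)]
      with t ht hv
    simpa only [smul_eq_mul, Finset.mul_sum, ht] using
      hasSum_sum (s := Finset.univ) fun i _ => hasSum_scaledChiSqCGF (r i) (a i) (hv i)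
  have hright := (eventually_abs_two_mul_mul_lt_one w).mono fun _ => hasSum_scaledChiSqCGF s b
  have hcoeff := congrFun (eq_of_eventually_hasSum_pow_succ_smul hleft hright) k
  exact mul_left_cancel₀ (by positivity) hcoeff

end CumulantGeneratingFunction

section MomentProblem

open Polynomial in
-- Composing the Lagrange interpolant `L` of `f` with `3 x² - 2 x³` keeps the values `0` and `1`
-- and kills the derivative there.
lemma exists_polynomial_eval_eq_and_derivative_eval_eq_zero {K : Type*} [Field K]
    (s : Finset K) {f : K → K} (hf : ∀ x ∈ s, f x = 0 ∨ f x = 1) :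
    ∃ p : K[X], ∀ x ∈ s, p.eval x = f x ∧ p.derivative.eval x = 0 := by
  classical
  let L := Lagrange.interpolate s id f
  refine ⟨3 * L ^ 2 - 2 * L ^ 3, fun x hx => ?_⟩
  have hL : L.eval x = f x := Lagrange.eval_interpolate_at_node f (Set.injOn_id _) hx
  rcases hf x hx with h | h
  · simp [derivative_pow, hL, h]
  · norm_num [derivative_pow, hL, h]
    ring

open Polynomial in
lemma sum_eval_add_eval_derivative_of_sum_moments {ι : Type*} [Fintype ι]
    {v a : ι → ℝ} {r N : ℝ}
    (h : ∀ k : ℕ, ∑ i, (v i ^ (k + 1) + (k + 1) * a i * v i ^ k) = r + (k + 1) * N) (p : ℝ[X]) :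
    ∑ i, ((v i + a i) * p.eval (v i) + a i * v i * p.derivative.eval (v i)) =
      (r + N) * p.eval 1 + N * p.derivative.eval 1 := by
  induction p using Polynomial.induction_on' with
  | add p q hp hq =>
    simp only [derivative_add, eval_add, mul_add, Finset.sum_add_distrib] at hp hq ⊢
    linear_combination hp + hq
  | monomial k c =>
    have hk := congrArg (c * ·) (h k)
    simp only [Finset.mul_sum] at hk
    simp only [eval_monomial, derivative_monomial, one_pow]
    rw [show (r + N) * (c * 1) + N * (c * k * 1) = c * (r + (k + 1) * N) by ring, ← hk]
    refine Finset.sum_congr rfl fun i _ => ?_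
    cases k with
    | zero => simp; ring
    | succ k => simp only [Nat.add_sub_cancel]; ring

lemma eq_one_or_eq_zero_of_sum_moments {ι : Type*} [Fintype ι]
    {v a : ι → ℝ} {r N : ℝ} (hv : ∀ i, 0 ≤ v i) (ha : ∀ i, 0 ≤ a i)
    (h : ∀ k : ℕ, ∑ i, (v i ^ (k + 1) + (k + 1) * a i * v i ^ k) = r + (k + 1) * N) :
    ∀ i, v i = 1 ∨ v i = 0 ∧ a i = 0 := by
  classical
  obtain ⟨p, hp⟩ := exists_polynomial_eval_eq_and_derivative_eval_eq_zero
    (insert 1 (Finset.univ.image v)) (f := fun x => if x = 1 then 0 else 1)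
    fun x _ => by by_cases hx : x = 1 <;> simp [hx]
  have hp_one := hp 1 (Finset.mem_insert_self _ _)
  have hp_node (i : ι) := hp (v i) (by simp)
  have hsum : ∑ i, (v i + a i) * (if v i = 1 then 0 else 1) = 0 := by
    simpa [hp_one, hp_node] using sum_eval_add_eval_derivative_of_sum_moments h p
  rw [Finset.sum_eq_zero_iff_of_nonneg fun i _ =>
    mul_nonneg (add_nonneg (hv i) (ha i)) (by positivity)] at hsum
  intro i
  have hi := hsum i (Finset.mem_univ i)
  by_cases h_one : v i = 1
  · exact .inl h_one
  · rw [if_neg h_one, mul_one, add_eq_zero_iff_of_nonneg (hv i) (ha i)] at hi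
    exact .inr hi

lemma sum_scaledChiSqCGF_of_eq_one_or_eq_zero {ι : Type*} [Fintype ι] {v a : ι → ℝ}
    (h : ∀ i, v i = 1 ∨ v i = 0 ∧ a i = 0) (t : ℝ) :
    ∑ i, scaledChiSqCGF 1 (v i) (a i) t = scaledChiSqCGF (∑ i, v i) 1 (∑ i, a i) t := by
  have hterm (i : ι) : scaledChiSqCGF 1 (v i) (a i) t = scaledChiSqCGF (v i) 1 (a i) t := by
    rcases h i with hi | ⟨hi, hai⟩
    · rw [hi]
    · simp [scaledChiSqCGF, hi, hai]
  rw [Finset.sum_congr rfl fun i _ => hterm i]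
  simp only [scaledChiSqCGF, Finset.mul_sum, Finset.sum_div, Finset.sum_mul,
    Finset.sum_sub_distrib]

theorem sum_scaledChiSqCGF_eventuallyEq_iff {ι : Type*} [Fintype ι] {v a : ι → ℝ} {r N : ℝ}
    (hv : ∀ i, 0 ≤ v i) (ha : ∀ i, 0 ≤ a i) :
    (fun t => ∑ i, scaledChiSqCGF 1 (v i) (a i) t) =ᶠ[𝓝 0] scaledChiSqCGF r 1 N ↔
      (∀ i, v i = 1 ∨ v i = 0 ∧ a i = 0) ∧ r = ∑ i, v i ∧ N = ∑ i, a i := by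
  refine ⟨fun h => ?_, fun ⟨hva, hr, hN⟩ => ?_⟩
  · have hmoment (k : ℕ) :
        ∑ i, (v i ^ (k + 1) + (k + 1) * a i * v i ^ k) = r + (k + 1) * N := by
      simpa using sum_moments_eq_of_sum_scaledChiSqCGF_eventuallyEq h k
    have hva := eq_one_or_eq_zero_of_sum_moments hv ha hmoment
    have hterm (k : ℕ) (i : ι) :
        v i ^ (k + 1) + (k + 1) * a i * v i ^ k = v i + (k + 1) * a i := by
      rcases hva i with hi | ⟨hi, hai⟩ <;> simp [*]
    simp only [hterm, Finset.sum_add_distrib, ← Finset.mul_sum] at hmoment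
    have hzero := hmoment 0
    have hone := hmoment 1
    push_cast at hzero hone
    exact ⟨hva, by linarith, by linarith⟩
  · exact .of_forall fun t => by
      simpa only [hr, hN] using sum_scaledChiSqCGF_of_eq_one_or_eq_zero hva t

end MomentProblem

section Gaussian

lemma mgf_sq_gaussianReal {v : NNReal} {t : ℝ} (m : ℝ) (h : 2 * t * v < 1) :
    mgf (fun x => x ^ 2) (gaussianReal m v) t = Real.exp (scaledChiSqCGF 1 v (m ^ 2) t) := by
  rcases eq_or_ne v 0 with rfl | hv
  · simp [mgf, scaledChiSqCGF]
  obtain ⟨s, hs⟩ : ∃ s, s = 1 - 2 * t * v := ⟨_, rfl⟩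
  have hs_pos : 0 < s := by linarith
  have complete_square (x : ℝ) : gaussianPDFReal m v x • Real.exp (t * x ^ 2) =
      ((√(2 * Real.pi * v))⁻¹ * Real.exp (t * m ^ 2 / s)) *
        Real.exp (-(s / (2 * v)) * (x - m / s) ^ 2) := by
    rw [gaussianPDFReal, smul_eq_mul, mul_assoc _ (Real.exp _), mul_assoc _ (Real.exp _),
      ← Real.exp_add, ← Real.exp_add]
    congr 2
    have ht : t = (1 - s) / (2 * v) := by rw [hs]; field_simp; ring
    rw [ht]
    field_simp
    ring
  have gaussian_integral : ∫ x, Real.exp (-(s / (2 * v)) * (x - m / s) ^ 2) =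
      √(2 * Real.pi * v) / √s := by
    rw [integral_sub_right_eq_self (fun x => Real.exp (-(s / (2 * v)) * x ^ 2)),
      integral_gaussian, ← Real.sqrt_div (by positivity)]
    congr 1
    field_simp
  have hrpow : s ^ (-1 / 2 : ℝ) = (√s)⁻¹ := by
    rw [neg_div, Real.rpow_neg hs_pos.le, Real.sqrt_eq_rpow]
  rw [mgf, integral_gaussianReal_eq_integral_smul hv]
  simp_rw [complete_square]
  rw [integral_const_mul, gaussian_integral, exp_scaledChiSqCGF _ _ h, ← hs, hrpow]
  have hv_sqrt : √(2 * Real.pi * v) ≠ 0 := by positivity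
  field_simp

namespace IsMultivariateGaussian

variable {Ω : Type*} [MeasurableSpace Ω] {n : ℕ} {P : Measure Ω} [IsProbabilityMeasure P]
  {X : Ω → EuclideanSpace ℝ (Fin n)} {μ : EuclideanSpace ℝ (Fin n)} {C : Matrix (Fin n) (Fin n) ℝ}

lemma iIndepFun_inner (hX : IsMultivariateGaussian P X μ C) (hC : C.PosSemidef)
    {ι : Type*} [Finite ι] {w : ι → EuclideanSpace ℝ (Fin n)}
    (hw : Pairwise fun i j => ⟪Matrix.toEuclideanLin C (w i), w j⟫ = 0) :
    iIndepFun (fun i ω => ⟪X ω, w i⟫) P := by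
  have := Fintype.ofFinite ι
  obtain ⟨hX_meas, hX_map⟩ := hX
  have hvar_nonneg (x) : 0 ≤ ⟪Matrix.toEuclideanLin C x, x⟫ :=
    (Matrix.isPositive_toEuclideanLin_iff.2 hC).inner_nonneg_left x
  have hvar_sum (c : EuclideanSpace ℝ ι) :
      ⟪Matrix.toEuclideanLin C (∑ i, c i • w i), ∑ i, c i • w i⟫ =
        ∑ i, ⟪Matrix.toEuclideanLin C (w i), w i⟫ * c i ^ 2 := by
    simp only [map_sum, map_smul, sum_inner, inner_sum, real_inner_smul_left,
      real_inner_smul_right]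
    refine Finset.sum_congr rfl fun i _ => ?_
    rw [Finset.sum_eq_single i (fun j _ hji => by simp [hw hji]) (by simp)]
    ring
  have hjoint (c : EuclideanSpace ℝ ι) :
      charFun (P.map fun ω => WithLp.toLp 2 fun i => ⟪X ω, w i⟫) c =
        charFun (P.map fun ω => ⟪X ω, ∑ i, c i • w i⟫) 1 := by
    rw [charFun_apply, charFun_apply, integral_map (by fun_prop) (by fun_prop),
      integral_map (by fun_prop) (by fun_prop)]
    simp [inner_sum, inner_smul_right, PiLp.inner_apply]
  rw [iIndepFun_iff_charFun_pi fun i => by fun_prop]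
  intro c
  simp_rw [hjoint, hX_map, charFun_gaussianReal, Real.coe_toNNReal _ (hvar_nonneg _), hvar_sum,
    ← Complex.exp_sum, Finset.sum_sub_distrib]
  simp [inner_sum, inner_smul_right, Finset.sum_mul, Finset.sum_div]

lemma mgf_norm_sq (hX : IsMultivariateGaussian P X μ C) (hC : C.PosSemidef)
    {ι : Type*} [Fintype ι]
    (b : OrthonormalBasis ι ℝ (EuclideanSpace ℝ (Fin n))) {v : ι → ℝ}
    (hb : ∀ i, Matrix.toEuclideanLin C (b i) = v i • b i) {t : ℝ} (ht : ∀ i, 2 * t * v i < 1) :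
    mgf (fun ω => ‖X ω‖ ^ 2) P t =
      Real.exp (∑ i, scaledChiSqCGF 1 (v i) (⟪μ, b i⟫ ^ 2) t) := by
  have hX_meas : Measurable X := hX.1
  have hvar (i : ι) : ⟪Matrix.toEuclideanLin C (b i), b i⟫ = v i := by
    simp [hb, real_inner_smul_left]
  have hv (i : ι) : 0 ≤ v i :=
    hvar i ▸ (Matrix.isPositive_toEuclideanLin_iff.2 hC).inner_nonneg_left (b i)
  have hindep : iIndepFun (fun i ω => ⟪X ω, b i⟫) P := hX.iIndepFun_inner hC fun i j hij => by
    simp [hb, real_inner_smul_left, b.inner_eq_zero hij]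
  have hsq_indep : iIndepFun (fun i ω => ⟪X ω, b i⟫ ^ 2) P :=
    hindep.comp (fun _ x => x ^ 2) fun _ => by fun_prop
  have hcoord (i : ι) : mgf (fun ω => ⟪X ω, b i⟫ ^ 2) P t =
      Real.exp (scaledChiSqCGF 1 (v i) (⟪μ, b i⟫ ^ 2) t) := by
    have hmgf := mgf_sq_gaussianReal (v := (v i).toNNReal) (t := t) ⟪μ, b i⟫
      (by simpa [hv i] using ht i)
    rwa [← hvar i, ← hX.2, mgf_map (by fun_prop) (by fun_prop), hvar, Real.coe_toNNReal _ (hv i)]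
      at hmgf
  have hnorm : (fun ω => ‖X ω‖ ^ 2) = ∑ i, fun ω => ⟪X ω, b i⟫ ^ 2 := by
    ext ω
    simp [← b.sum_sq_norm_inner_left]
  rw [hnorm, hsq_indep.mgf_sum (fun i => by fun_prop), Real.exp_sum]
  exact Finset.prod_congr rfl fun i _ => hcoord i

end IsMultivariateGaussian

end Gaussian

section Spectrum

lemma apply_eq_self_iff_of_forall_apply_eq_smul {ι R M : Type*} [CommRing R] [NoZeroDivisors R]
    [AddCommGroup M] [Module R M] (b : Module.Basis ι R M) {T : M →ₗ[R] M} {v : ι → R}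
    (hT : ∀ i, T (b i) = v i • b i) (x : M) : T x = x ↔ ∀ i, v i = 1 ∨ b.repr x i = 0 := by
  have hrepr (i : ι) : b.repr (T x) i = v i * b.repr x i := by
    have hcoord : b.coord i ∘ₗ T = v i • b.coord i := b.ext fun j => by
      rcases eq_or_ne j i with rfl | hij <;> simp [*]
    exact LinearMap.congr_fun hcoord x
  simp only [b.ext_elem_iff, hrepr, mul_left_eq_self₀]

variable {𝕜 m : Type*} [RCLike 𝕜] [Fintype m] [DecidableEq m] {A : Matrix m m 𝕜}

lemma toEuclideanLin_eigenvectorBasis (hA : A.IsHermitian) (i : m) :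
    Matrix.toEuclideanLin A (hA.eigenvectorBasis i) =
      hA.eigenvalues i • hA.eigenvectorBasis i :=
  WithLp.ofLp_injective 2 (hA.mulVec_eigenvectorBasis i)

lemma mul_self_eq_self_iff_eigenvalues (hA : A.IsHermitian) :
    A * A = A ↔ ∀ i, hA.eigenvalues i = 0 ∨ hA.eigenvalues i = 1 := by
  rw [← isIdempotentElem_iff, isIdempotentElem_iff_spectrum_subset ℝ A hA,
    hA.spectrum_real_eq_range_eigenvalues, Set.range_subset_iff]
  simp

lemma rank_eq_sum_eigenvalues_of_mul_self_eq_self (hA : A.IsHermitian) (h : A * A = A) :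
    (A.rank : ℝ) = ∑ i, hA.eigenvalues i := by
  rw [hA.rank_eq_card_non_zero_eigs, Fintype.card_subtype, Finset.card_filter, Nat.cast_sum]
  refine Finset.sum_congr rfl fun i _ => ?_
  rcases (mul_self_eq_self_iff_eigenvalues hA).1 h i with hi | hi <;> simp [hi]

lemma mul_self_eq_self_and_apply_eq_self_iff (hA : A.IsHermitian) (x : EuclideanSpace 𝕜 m) :
    A * A = A ∧ Matrix.toEuclideanLin A x = x ↔
      ∀ i, hA.eigenvalues i = 1 ∨ hA.eigenvalues i = 0 ∧ inner 𝕜 x (hA.eigenvectorBasis i) = 0 := by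
  have hT (i : m) : Matrix.toEuclideanLin A (hA.eigenvectorBasis.toBasis i) =
      (hA.eigenvalues i : 𝕜) • hA.eigenvectorBasis.toBasis i := by
    rw [OrthonormalBasis.coe_toBasis, toEuclideanLin_eigenvectorBasis,
      RCLike.real_smul_eq_coe_smul (K := 𝕜)]
  rw [mul_self_eq_self_iff_eigenvalues hA, apply_eq_self_iff_of_forall_apply_eq_smul _ hT,
    ← forall_and]
  simp only [OrthonormalBasis.coe_toBasis_repr_apply, OrthonormalBasis.repr_apply_apply,
    inner_eq_zero_symm (x := x), ← RCLike.ofReal_one (K := 𝕜),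
    RCLike.ofReal_inj]
  grind

end Spectrum

theorem norm_sq_gaussian_chiSquare_iff_general
    {Ω : Type*} [MeasurableSpace Ω] {n : ℕ} {P : Measure Ω} [IsProbabilityMeasure P]
    {X : Ω → EuclideanSpace ℝ (Fin n)} {μ : EuclideanSpace ℝ (Fin n)}
    {C : Matrix (Fin n) (Fin n) ℝ} (hC : C.PosSemidef) (hX : IsMultivariateGaussian P X μ C)
    (r ν : ℝ) :
    (∀ᶠ t in 𝓝 (0 : ℝ), ∫ ω, Real.exp (t * ‖X ω‖ ^ 2) ∂P =
        Real.exp (t * ν ^ 2 / (1 - 2 * t)) * (1 - 2 * t) ^ (-r / 2)) ↔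
      C * C = C ∧ Matrix.toEuclideanLin C μ = μ ∧ r = C.rank ∧ |ν| = ‖μ‖ := by
  let b := hC.1.eigenvectorBasis
  let v := hC.1.eigenvalues
  calc
    _ ↔ (fun t => ∑ i, scaledChiSqCGF 1 (v i) (⟪μ, b i⟫ ^ 2) t) =ᶠ[𝓝 0]
        scaledChiSqCGF r 1 (ν ^ 2) := by
      refine eventually_congr ?_
      filter_upwards [eventually_abs_two_mul_mul_lt_one 1,
        eventually_all.2 fun i => eventually_abs_two_mul_mul_lt_one (v i)] with t ht_one ht
      have hchi := exp_scaledChiSqCGF r (ν ^ 2) (lt_of_abs_lt ht_one)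
      have hnorm := hX.mgf_norm_sq hC b (toEuclideanLin_eigenvectorBasis hC.1)
        fun i => lt_of_abs_lt (ht i)
      rw [mul_one] at hchi
      rw [mgf] at hnorm
      rw [hnorm, ← hchi, Real.exp_injective.eq_iff]
    _ ↔ (∀ i, v i = 1 ∨ v i = 0 ∧ ⟪μ, b i⟫ ^ 2 = 0) ∧ r = ∑ i, v i ∧ ν ^ 2 = ∑ i, ⟪μ, b i⟫ ^ 2 :=
      sum_scaledChiSqCGF_eventuallyEq_iff hC.eigenvalues_nonneg fun i => sq_nonneg _
    _ ↔ (C * C = C ∧ Matrix.toEuclideanLin C μ = μ) ∧ r = ∑ i, v i ∧ |ν| = ‖μ‖ := by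
      rw [mul_self_eq_self_and_apply_eq_self_iff hC.1 μ, b.sum_sq_inner_left,
        sq_eq_sq_iff_abs_eq_abs, abs_norm]
      simp only [sq_eq_zero_iff, v, b]
    _ ↔ C * C = C ∧ Matrix.toEuclideanLin C μ = μ ∧ r = C.rank ∧ |ν| = ‖μ‖ := by
      rw [← and_assoc (a := C * C = C)]
      exact and_congr_right fun h => by rw [rank_eq_sum_eigenvalues_of_mul_self_eq_self hC.1 h.1]

theorem norm_sq_gaussian_chiSquare_iff
    {Ω : Type*} [MeasurableSpace Ω] {n : ℕ}
    (P : Measure Ω) [IsProbabilityMeasure P]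
    (X : Ω → EuclideanSpace ℝ (Fin n))
    (μ : EuclideanSpace ℝ (Fin n)) (C : Matrix (Fin n) (Fin n) ℝ)
    (hC : C.PosSemidef)
    (hX : IsMultivariateGaussian P X μ C) :
    ((∃ r : ℕ, ∃ ν : ℝ, 0 ≤ ν ∧
        ∀ᶠ t in nhds (0 : ℝ),
          ∫ ω, Real.exp (t * ‖X ω‖ ^ 2) ∂P =
            Real.exp (t * ν ^ 2 / (1 - 2 * t)) * (1 - 2 * t) ^ (-(r : ℝ) / 2)) ↔
      C * C = C ∧ Matrix.toEuclideanLin C μ = μ) ∧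
    ∀ r : ℕ, ∀ ν : ℝ, 0 ≤ ν →
      (∀ᶠ t in nhds (0 : ℝ),
          ∫ ω, Real.exp (t * ‖X ω‖ ^ 2) ∂P =
            Real.exp (t * ν ^ 2 / (1 - 2 * t)) * (1 - 2 * t) ^ (-(r : ℝ) / 2)) →
      r = C.rank ∧ ν = ‖μ‖ := by
  have h_iff (r ν : ℝ) := norm_sq_gaussian_chiSquare_iff_general hC hX r ν
  refine ⟨⟨fun ⟨r, ν, _, h⟩ => ?_, fun ⟨hCC, hCμ⟩ => ?_⟩, fun r ν hν h => ?_⟩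
  · exact ⟨((h_iff r ν).1 h).1, ((h_iff r ν).1 h).2.1⟩
  · exact ⟨C.rank, ‖μ‖, norm_nonneg μ, (h_iff _ _).2 ⟨hCC, hCμ, rfl, abs_norm μ⟩⟩
  · obtain ⟨-, -, hr, h_norm⟩ := (h_iff r ν).1 h
    exact ⟨mod_cast hr, abs_of_nonneg hν ▸ h_norm⟩
end

section
/- Let X be a random vector with values in EuclideanSpace ℝ (Fin n) whose distribution is the multivariate Gaussian measure with mean vector μ and symmetric positive semidefinite covariance matrix C. Then there exists ε > 0 such that for all real t with |t| < ε, the matrix I − 2tC is invertible and E[exp(t·‖X‖²)] = exp(t·⟪μ, (I − 2tC)⁻¹ μ⟫)·(det(I − 2tC))^(−1/2). -/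
open MeasureTheory ProbabilityTheory
open scoped RealInnerProductSpace

/-!
An orthogonal matrix `U` preserves the norm and carries the Gaussian law `N(m, Λ)` to
`N(U m, U Λ Uᵀ)`, while both sides of the formula are unchanged. By the spectral theorem we may
therefore take the covariance `Λ` diagonal. The coordinates are then independent, the
moment-generating function of `‖X‖² = ∑ i, X i ^ 2` is a product, and completing the square in each
one-dimensional Gaussian integral gives its factors.
-/

open Matrix Real Filter Topology Unitary
open scoped NNReal

theorem gaussianPDFReal_mul_exp_mul_sq {v : ℝ≥0} (hv : v ≠ 0) (m : ℝ) {t : ℝ}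
    (ht : 1 - 2 * t * v ≠ 0) (x : ℝ) :
    gaussianPDFReal m v x * exp (t * x ^ 2) =
      (√(2 * π * v))⁻¹ * exp (t * (m ^ 2 / (1 - 2 * t * v))) *
        exp (-((1 - 2 * t * v) / (2 * v)) * (x - m / (1 - 2 * t * v)) ^ 2) := by
  rw [gaussianPDFReal, mul_assoc, mul_assoc (_⁻¹), ← exp_add, ← exp_add]
  obtain ⟨d, hd⟩ : ∃ d, 1 - 2 * t * v = d := ⟨_, rfl⟩
  have ht_eq : t = (1 - d) / (2 * v) := by rw [← hd]; field_simp; ring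
  rw [hd] at ht ⊢
  rw [ht_eq]
  congr 2
  field_simp
  ring

theorem mgf_sq_gaussianReal_s7 (m : ℝ) (v : ℝ≥0) {t : ℝ} (ht : 0 < 1 - 2 * t * v) :
    mgf (fun x ↦ x ^ 2) (gaussianReal m v) t =
      exp (t * (m ^ 2 / (1 - 2 * t * v))) * (1 - 2 * t * v) ^ (-(1 : ℝ) / 2) := by
  obtain rfl | hv := eq_or_ne v 0
  · simp [mgf]
  have sqrt_ne_zero : √(2 * π * v) ≠ 0 := by positivity
  have sqrt_quotient : √(π / ((1 - 2 * t * v) / (2 * v))) = √(2 * π * v) / √(1 - 2 * t * v) := by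
    rw [← sqrt_div (by positivity)]
    field_simp
  rw [mgf, integral_gaussianReal_eq_integral_smul hv]
  simp_rw [smul_eq_mul, gaussianPDFReal_mul_exp_mul_sq hv m ht.ne']
  rw [integral_const_mul,
    integral_sub_right_eq_self (fun x ↦ exp (-((1 - 2 * t * v) / (2 * v)) * x ^ 2)),
    integral_gaussian, sqrt_quotient, neg_div, rpow_neg ht.le, ← sqrt_eq_rpow]
  field_simp

section Matrix

theorem one_sub_smul_diagonal {ι α R : Type*} [DecidableEq ι] [AddGroupWithOne R]
    [SMulZeroClass α R] (s : α) (d : ι → R) :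
    1 - s • diagonal d = diagonal fun i ↦ 1 - s • d i := by
  rw [← diagonal_one, ← diagonal_smul, diagonal_sub]
  rfl

variable {ι : Type*} [Fintype ι] [DecidableEq ι]

section CommRing

variable {R : Type*} [CommRing R] [StarRing R]

theorem inv_conjStarAlgAut (U : unitary (Matrix ι ι R)) (A : Matrix ι ι R) :
    (conjStarAlgAut R _ U A)⁻¹ = conjStarAlgAut R _ U A⁻¹ := by
  rw [conjStarAlgAut_apply, conjStarAlgAut_apply, Matrix.mul_inv_rev, Matrix.mul_inv_rev,
    inv_eq_left_inv (mul_star_self_of_mem U.2), inv_eq_left_inv (star_mul_self_of_mem U.2),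
    mul_assoc]

theorem det_conjStarAlgAut (U : unitary (Matrix ι ι R)) (A : Matrix ι ι R) :
    (conjStarAlgAut R _ U A).det = A.det := by
  rw [conjStarAlgAut_apply, det_mul_right_comm, mul_star_self_of_mem U.2, one_mul]

theorem posDef_conjStarAlgAut_iff [PartialOrder R] (U : unitary (Matrix ι ι R))
    {A : Matrix ι ι R} : (conjStarAlgAut R _ U A).PosDef ↔ A.PosDef :=
  IsUnit.posDef_star_right_conjugate_iff isUnit_coe

end CommRing

section RCLike

variable {𝕜 : Type*} [RCLike 𝕜]

theorem inner_toEuclideanLin_unitary (U : unitary (Matrix ι ι 𝕜)) (x y : EuclideanSpace 𝕜 ι) :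
    inner 𝕜 (toEuclideanLin U.1 x) (toEuclideanLin U.1 y) = inner 𝕜 x y := by
  rw [← LinearMap.adjoint_inner_right, ← toEuclideanLin_conjTranspose_eq_adjoint,
    ← LinearMap.comp_apply, ← toLpLin_mul_same, ← star_eq_conjTranspose,
    star_mul_self_of_mem U.2, toLpLin_one, LinearMap.id_apply]

theorem inner_toEuclideanLin_conjStarAlgAut (U : unitary (Matrix ι ι 𝕜)) (A : Matrix ι ι 𝕜)
    (x y : EuclideanSpace 𝕜 ι) :
    inner 𝕜 (toEuclideanLin U.1 x)
        (toEuclideanLin (conjStarAlgAut 𝕜 _ U A) (toEuclideanLin U.1 y)) =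
      inner 𝕜 x (toEuclideanLin A y) := by
  have conj_mul : conjStarAlgAut 𝕜 _ U A * U.1 = U.1 * A := by
    rw [conjStarAlgAut_apply, mul_assoc, star_mul_self_of_mem U.2, mul_one]
  rw [← LinearMap.comp_apply, ← toLpLin_mul_same, conj_mul, toLpLin_mul_same,
    LinearMap.comp_apply, inner_toEuclideanLin_unitary]

open scoped ComplexOrder in
theorem eventually_posDef_one_sub_smul {κ : Type*} [Finite κ] [DecidableEq κ] {A : Matrix κ κ 𝕜}
    (hA : A.IsHermitian) : ∀ᶠ s : ℝ in 𝓝 0, (1 - s • A).PosDef := by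
  cases nonempty_fintype κ
  have posDef_iff (s : ℝ) : (1 - s • A).PosDef ↔ ∀ i, 0 < 1 - s * hA.eigenvalues i := by
    conv_lhs => rw [hA.spectral_theorem, ← algebraMap_smul 𝕜 s, ← map_smul,
      ← map_one (conjStarAlgAut 𝕜 _ hA.eigenvectorUnitary), ← map_sub, posDef_conjStarAlgAut_iff,
      one_sub_smul_diagonal, posDef_diagonal_iff]
    refine forall_congr' fun i ↦ ?_
    simp only [Function.comp_apply, smul_eq_mul, sub_pos]
    norm_cast
  simp_rw [posDef_iff, eventually_all]
  intro i
  have : Continuous fun s : ℝ ↦ 1 - s * hA.eigenvalues i := by fun_prop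
  exact this.continuousAt.eventually_const_lt (by simp)

end RCLike

theorem inner_toEuclideanLin_diagonal (d : ι → ℝ) (x : EuclideanSpace ℝ ι) :
    ⟪x, toEuclideanLin (diagonal d) x⟫ = ∑ i, d i * x i ^ 2 := by
  simp only [PiLp.inner_apply, toLpLin_apply, mulVec_diagonal]
  exact Finset.sum_congr rfl fun i _ ↦ by simp; ring

end Matrix

section Multivariate

variable {ι : Type*} [Fintype ι]

theorem mgf_norm_sq_map_toLp_pi (ν : ι → Measure ℝ) [∀ i, SigmaFinite (ν i)] (t : ℝ) :
    mgf (fun x ↦ ‖x‖ ^ 2) ((Measure.pi ν).map (WithLp.toLp 2)) t =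
      ∏ i, mgf (fun x ↦ x ^ 2) (ν i) t := by
  rw [mgf_map (by fun_prop) (by fun_prop)]
  simp_rw [mgf, Function.comp_apply, EuclideanSpace.real_norm_sq_eq, Finset.mul_sum, exp_sum]
  exact integral_fintype_prod_eq_prod fun _ x ↦ exp (t * x ^ 2)

variable [DecidableEq ι]

theorem multivariateGaussian_diagonal (m : EuclideanSpace ℝ ι) (v : ι → ℝ≥0) :
    multivariateGaussian m (diagonal fun i ↦ (v i : ℝ)) =
      (Measure.pi fun i ↦ gaussianReal (m i) (v i)).map (WithLp.toLp 2) := by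
  have hv : (diagonal fun i ↦ (v i : ℝ)).PosSemidef := by simp [posSemidef_diagonal_iff]
  refine Measure.ext_of_charFun (E := EuclideanSpace ℝ ι) (funext fun x ↦ ?_)
  simp_rw [charFun_multivariateGaussian hv, charFun_pi, charFun_gaussianReal, ← Complex.exp_sum,
    Finset.sum_sub_distrib, ← Finset.sum_mul, ← Finset.sum_div, PiLp.inner_apply, dotProduct,
    mulVec_diagonal]
  push_cast
  congr 3 <;> refine Finset.sum_congr rfl fun i _ ↦ ?_
  · simp [mul_comm]
  · ring

theorem mgf_norm_sq_multivariateGaussian_diagonal (m : EuclideanSpace ℝ ι) (v : ι → ℝ≥0) {t : ℝ}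
    (ht : (1 - (2 * t) • diagonal fun i ↦ (v i : ℝ)).PosDef) :
    mgf (fun x ↦ ‖x‖ ^ 2) (multivariateGaussian m (diagonal fun i ↦ (v i : ℝ))) t =
      exp (t * ⟪m, toEuclideanLin (1 - (2 * t) • diagonal fun i ↦ (v i : ℝ))⁻¹ m⟫) *
        (1 - (2 * t) • diagonal fun i ↦ (v i : ℝ)).det ^ (-(1 : ℝ) / 2) := by
  simp_rw [one_sub_smul_diagonal, smul_eq_mul] at ht ⊢
  have hpos : ∀ i, 0 < 1 - 2 * t * v i := posDef_diagonal_iff.1 ht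
  have inv_diagonal : (diagonal fun i ↦ 1 - 2 * t * (v i : ℝ))⁻¹ =
      diagonal fun i ↦ (1 - 2 * t * v i)⁻¹ :=
    inv_eq_left_inv (by simp [(hpos _).ne'])
  rw [multivariateGaussian_diagonal, mgf_norm_sq_map_toLp_pi, inv_diagonal,
    inner_toEuclideanLin_diagonal, det_diagonal, ← finsetProd_rpow _ _ fun i _ ↦ (hpos i).le,
    Finset.mul_sum, exp_sum, ← Finset.prod_mul_distrib]
  exact Finset.prod_congr rfl fun i _ ↦ by rw [mgf_sq_gaussianReal_s7 _ _ (hpos i), inv_mul_eq_div]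

theorem map_toEuclideanLin_multivariateGaussian {κ : Type*} [Fintype κ] [DecidableEq κ]
    (A : Matrix κ ι ℝ) (μ : EuclideanSpace ℝ ι) {S : Matrix ι ι ℝ} (hS : S.PosSemidef) :
    (multivariateGaussian μ S).map (toEuclideanLin A) =
      multivariateGaussian (toEuclideanLin A μ) (A * S * Aᴴ) := by
  have hmeas : Measurable (toEuclideanLin A) :=
    (LinearMap.continuous_of_finiteDimensional _).measurable
  have charFun_map (x : EuclideanSpace ℝ κ) :
      charFun ((multivariateGaussian μ S).map (toEuclideanLin A)) x =
        charFun (multivariateGaussian μ S) (toEuclideanLin Aᴴ x) := by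
    rw [charFun_apply, charFun_apply, integral_map hmeas.aemeasurable (by fun_prop)]
    simp_rw [toEuclideanLin_conjTranspose_eq_adjoint, LinearMap.adjoint_inner_right]
  have := Measure.isProbabilityMeasure_map (μ := multivariateGaussian μ S) hmeas.aemeasurable
  refine Measure.ext_of_charFun (funext fun x ↦ ?_)
  rw [charFun_map, charFun_multivariateGaussian hS,
    charFun_multivariateGaussian (hS.mul_mul_conjTranspose_same A),
    toEuclideanLin_conjTranspose_eq_adjoint, LinearMap.adjoint_inner_left,
    ← toEuclideanLin_conjTranspose_eq_adjoint]
  congr 4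
  simp [← mulVec_mulVec, dotProduct_mulVec, ← mulVec_transpose, toLpLin_apply]

theorem mgf_norm_sq_multivariateGaussian_conj (U : unitary (Matrix ι ι ℝ))
    (μ : EuclideanSpace ℝ ι) {S : Matrix ι ι ℝ} (hS : S.PosSemidef) (t : ℝ) :
    mgf (fun x ↦ ‖x‖ ^ 2)
        (multivariateGaussian (toEuclideanLin U.1 μ) (conjStarAlgAut ℝ _ U S)) t =
      mgf (fun x ↦ ‖x‖ ^ 2) (multivariateGaussian μ S) t := by
  have hU : Continuous (toEuclideanLin U.1) := LinearMap.continuous_of_finiteDimensional _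
  rw [conjStarAlgAut_apply, star_eq_conjTranspose, ← map_toEuclideanLin_multivariateGaussian _ _ hS,
    mgf_map hU.measurable.aemeasurable (by fun_prop)]
  simp only [Function.comp_def, ← real_inner_self_eq_norm_sq, inner_toEuclideanLin_unitary]

theorem mgf_norm_sq_multivariateGaussian (μ : EuclideanSpace ℝ ι) {S : Matrix ι ι ℝ}
    (hS : S.PosSemidef) {t : ℝ} (ht : (1 - (2 * t) • S).PosDef) :
    mgf (fun x ↦ ‖x‖ ^ 2) (multivariateGaussian μ S) t =
      exp (t * ⟪μ, toEuclideanLin (1 - (2 * t) • S)⁻¹ μ⟫) *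
        (1 - (2 * t) • S).det ^ (-(1 : ℝ) / 2) := by
  obtain ⟨U, v, rfl⟩ : ∃ (U : unitary (Matrix ι ι ℝ)) (v : ι → ℝ≥0),
      S = conjStarAlgAut ℝ _ U (diagonal fun i ↦ (v i : ℝ)) :=
    ⟨hS.isHermitian.eigenvectorUnitary, fun i ↦ ⟨_, hS.eigenvalues_nonneg i⟩,
      hS.isHermitian.spectral_theorem⟩
  obtain ⟨m, rfl⟩ : ∃ m, toEuclideanLin U.1 m = μ :=
    ⟨toEuclideanLin (star U.1) μ, by
      rw [← LinearMap.comp_apply, ← toLpLin_mul_same, mul_star_self_of_mem U.2, toLpLin_one,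
        LinearMap.id_apply]⟩
  rw [← map_smul, ← map_one (conjStarAlgAut ℝ _ U), ← map_sub] at ht ⊢
  rw [mgf_norm_sq_multivariateGaussian_conj _ _ (by simp [posSemidef_diagonal_iff]),
    inv_conjStarAlgAut, inner_toEuclideanLin_conjStarAlgAut, det_conjStarAlgAut]
  exact mgf_norm_sq_multivariateGaussian_diagonal m v ((posDef_conjStarAlgAut_iff U).1 ht)

theorem mgf_norm_sq_gaussian_general {Ω : Type*} [MeasurableSpace Ω] {P : Measure Ω}
    {X : Ω → EuclideanSpace ℝ ι} {μ : EuclideanSpace ℝ ι} {S : Matrix ι ι ℝ} (hS : S.PosSemidef)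
    (hX : HasLaw X (multivariateGaussian μ S) P) {t : ℝ} (ht : (1 - (2 * t) • S).PosDef) :
    mgf (fun ω ↦ ‖X ω‖ ^ 2) P t =
      exp (t * ⟪μ, toEuclideanLin (1 - (2 * t) • S)⁻¹ μ⟫) *
        (1 - (2 * t) • S).det ^ (-(1 : ℝ) / 2) := by
  rw [← mgf_norm_sq_multivariateGaussian μ hS ht, ← hX.map_eq,
    mgf_map hX.aemeasurable (by fun_prop)]
  rfl

end Multivariate

theorem IsMultivariateGaussian.hasLaw {Ω : Type*} [MeasurableSpace Ω] {n : ℕ} {P : Measure Ω}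
    {X : Ω → EuclideanSpace ℝ (Fin n)} {μ : EuclideanSpace ℝ (Fin n)} {C : Matrix (Fin n) (Fin n) ℝ}
    (hX : IsMultivariateGaussian P X μ C) (hC : C.PosSemidef) :
    HasLaw X (multivariateGaussian μ C) P where
  aemeasurable := hX.1.aemeasurable
  map_eq := by
    have hX_meas := hX.1
    have : IsProbabilityMeasure P := (HasLaw.mk (by fun_prop) (hX.2 0)).isProbabilityMeasure
    have := Measure.isProbabilityMeasure_map (μ := P) hX_meas.aemeasurable
    refine Measure.ext_of_charFun (funext fun v ↦ ?_)
    have charFun_map_inner : charFun (P.map X) v = charFun (P.map fun ω ↦ ⟪X ω, v⟫) 1 := by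
      rw [charFun_apply, charFun_apply_real, integral_map (by fun_prop) (by fun_prop),
        integral_map (by fun_prop) (by fun_prop)]
      simp
    have variance_eq : ⟪toEuclideanLin C v, v⟫ = v ⬝ᵥ C *ᵥ v := by
      rw [real_inner_comm]
      exact inner_toEuclideanCLM C v v
    rw [charFun_map_inner, hX.2 v, charFun_gaussianReal, charFun_multivariateGaussian hC,
      variance_eq, real_inner_comm, coe_toNNReal _ (by simpa using hC.dotProduct_mulVec_nonneg v)]
    simp

theorem mgf_norm_sq_gaussian
    {Ω : Type*} [MeasurableSpace Ω] {n : ℕ}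
    (P : Measure Ω) [IsProbabilityMeasure P]
    (X : Ω → EuclideanSpace ℝ (Fin n))
    (μ : EuclideanSpace ℝ (Fin n)) (C : Matrix (Fin n) (Fin n) ℝ)
    (hC : C.PosSemidef)
    (hX : IsMultivariateGaussian P X μ C) :
    ∃ ε > (0 : ℝ), ∀ t : ℝ, |t| < ε →
      IsUnit ((1 : Matrix (Fin n) (Fin n) ℝ) - (2 * t) • C) ∧
      ∫ ω, Real.exp (t * ‖X ω‖ ^ 2) ∂P =
        Real.exp (t * ⟪μ, Matrix.toEuclideanLin ((1 - (2 * t) • C)⁻¹) μ⟫) *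
          ((1 : Matrix (Fin n) (Fin n) ℝ) - (2 * t) • C).det ^ (-(1 : ℝ) / 2) := by
  have posDef_near_zero : ∀ᶠ t : ℝ in 𝓝 0, (1 - (2 * t) • C).PosDef :=
    (continuous_const_mul (2 : ℝ)).tendsto' 0 0 (mul_zero 2)
      |>.eventually (eventually_posDef_one_sub_smul hC.isHermitian)
  obtain ⟨ε, hε, posDef_of_dist_lt⟩ := Metric.eventually_nhds_iff.1 posDef_near_zero
  refine ⟨ε, hε, fun t ht ↦ ?_⟩
  have hpos : (1 - (2 * t) • C).PosDef := posDef_of_dist_lt (by simpa using ht)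
  exact ⟨hpos.isUnit, mgf_norm_sq_gaussian_general hC (hX.hasLaw hC) hpos⟩
end
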